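/- Let ρ be a planar straight-line drawing of a k-banana (k ≥ 2) with covering vertices a, b and independent vertices c_1, …, c_k. If some pair of edges incident to a is aligned at a (i.e., there exist indices i ≠ j with ρ(a) in the open segment between ρ(c_i) and ρ(c_j)), then no pair of edges incident to b is aligned at b (i.e., there are no indices s ≠ t with ρ(b) in the open segment between ρ(c_s) and ρ(c_t)). -/

import Mathlib

/-!
The edges aligned at `a` lie on a line through `a`, those aligned at `b` on a line through `b`,
and neither is the line `ab`: on that line `a` would lie on an edge at `b`, or the other way
round (`cross_ne_zero`). Both lines therefore have a drawn edge on each side of `ab`, and they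
meet on at most one side. On a side where they do not meet, the far ends `p`, `q` of the
edges `ap`, `bq` span a convex quadrilateral `a, p, q, b`, whose diagonals `aq` and `bp` are edges
and cross (`diagonals_meet`). The ends `p` and `q` are distinct, since a common end would be a
meeting point of the two lines, so the crossing contradicts planarity.

All positions are expressed by signs of the cross product `cross`.
-/

open Set

variable {V : Type*}

/-- A planar straight-line drawing of a simple graph `G` in the plane `ℝ × ℝ`. -/
structure IsPlanarDrawing (G : SimpleGraph V) (ρ : V → ℝ × ℝ) : Prop where
  inj : Function.Injective ρ
  edge_inter : ∀ ⦃u v x y : V⦄, G.Adj u v → G.Adj x y → s(u, v) ≠ s(x, y) →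
    ∀ p : ℝ × ℝ, p ∈ segment ℝ (ρ u) (ρ v) → p ∈ segment ℝ (ρ x) (ρ y) →
      ∃ w : V, (w = u ∨ w = v) ∧ (w = x ∨ w = y) ∧ p = ρ w
  vertex_not_on_edge : ∀ ⦃u v w : V⦄, G.Adj u v → w ≠ u → w ≠ v →
    ρ w ∉ segment ℝ (ρ u) (ρ v)

/-- Two incident edges `e = {u,v}` and `f = {v,w}` are aligned in the drawing `ρ`
if the image of the shared vertex `v` lies strictly between the images of `u` and `w`. -/
def Aligned (G : SimpleGraph V) (ρ : V → ℝ × ℝ) (e f : Sym2 V) : Prop :=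
  ∃ u v w : V, u ≠ w ∧ G.Adj u v ∧ G.Adj v w ∧ e = s(u, v) ∧ f = s(v, w) ∧
    ρ v ∈ openSegment ℝ (ρ u) (ρ w)

/-- The number of (unordered) pairs of incident edges that are aligned in the drawing `ρ`. -/
noncomputable def numAlignedPairs (G : SimpleGraph V) (ρ : V → ℝ × ℝ) : ℕ :=
  Set.ncard {q : Sym2 (Sym2 V) | ∃ e f : Sym2 V, q = s(e, f) ∧ Aligned G ρ e f}

/-- The number of segments of the drawing `ρ`: the number of equivalence classes of edges
under the reflexive-transitive closure of the alignment relation. -/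
noncomputable def numSegments (G : SimpleGraph V) (ρ : V → ℝ × ℝ) : ℕ :=
  Set.ncard {S : Set (Sym2 V) |
    ∃ e ∈ G.edgeSet, S = {f | Relation.ReflTransGen (Aligned G ρ) e f}}

/-- The segment number of `G`: the minimum number of segments over all
planar straight-line drawings of `G`. -/
noncomputable def segNumber (G : SimpleGraph V) : ℕ :=
  sInf {n : ℕ | ∃ ρ : V → ℝ × ℝ, IsPlanarDrawing G ρ ∧ numSegments G ρ = n}

/-- A line in the plane. -/
def IsLine (L : Set (ℝ × ℝ)) : Prop :=
  ∃ a b : ℝ × ℝ, a ≠ b ∧ L = {p : ℝ × ℝ | ∃ t : ℝ, p = a + t • (b - a)}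

/-- The line cover number of `G`: the minimum, over all planar straight-line drawings of `G`,
of the minimum number of lines whose union contains the drawn segments of all edges. -/
noncomputable def linNumber (G : SimpleGraph V) : ℕ :=
  sInf {n : ℕ | ∃ ρ : V → ℝ × ℝ, IsPlanarDrawing G ρ ∧
    ∃ 𝓛 : Finset (Set (ℝ × ℝ)), 𝓛.card = n ∧ (∀ L ∈ 𝓛, IsLine L) ∧
      ∀ ⦃u v : V⦄, G.Adj u v → segment ℝ (ρ u) (ρ v) ⊆ ⋃ L ∈ 𝓛, L}

/-- The `k`-banana: vertices `a = Sum.inl false`, `b = Sum.inl true` (covering vertices) and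
`c i = Sum.inr i` for `i : Fin k` (independent vertices); edges `{a, c i}` and `{c i, b}`. -/
def banana (k : ℕ) : SimpleGraph (Bool ⊕ Fin k) :=
  SimpleGraph.fromRel fun x y =>
    ∃ i : Fin k, (x = Sum.inl false ∨ x = Sum.inl true) ∧ y = Sum.inr i

/-- A connected component of `G` is a path component if its induced subgraph is isomorphic
to a path graph with at least two vertices (i.e., at least one edge). -/
def IsPathComponent (G : SimpleGraph V) (c : G.ConnectedComponent) : Prop :=
  ∃ n : ℕ, 2 ≤ n ∧ Nonempty (G.induce c.supp ≃g SimpleGraph.pathGraph n)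

/-- The planar cross product (the determinant of the matrix with columns `u` and `v`). -/
def cross (u v : ℝ × ℝ) : ℝ := u.1 * v.2 - u.2 * v.1

/-- If `p` and `q` lie on the same side of `ab` and the rays `ap`, `bq` do not converge on that side,
then the diagonals `aq` and `bp` of the quadrilateral `a, p, q, b` meet. -/
lemma diagonals_meet {a b p q : ℝ × ℝ}
    (hDE : 0 < cross (b - a) (p - a) * cross (b - a) (q - b))
    (hDK : cross (b - a) (p - a) * cross (p - a) (q - b) ≤ 0) :
    ∃ x, x ∈ segment ℝ a q ∧ x ∈ segment ℝ b p := by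
  set D := cross (b - a) (p - a) with hD
  set E := cross (b - a) (q - b) with hE
  set K := cross (p - a) (q - b) with hK
  -- Cramer's rule puts the meeting point at parameter `D / S` on `aq` and `E / S` on `bp`.
  set S := D + E - K with hS
  have hD0 : D ≠ 0 := by rintro h0; simp [h0] at hDE
  have hDD : 0 < D * D := mul_self_pos.2 hD0
  have hDS : 0 < D * S := by rw [hS]; nlinarith
  have hS0 : S ≠ 0 := by rintro h0; simp [h0] at hDS
  have hSS : 0 < S * S := mul_self_pos.2 hS0
  have e1 : D / S = D * D / (D * S) := by field_simp
  have e2 : E / S = D * E / (D * S) := by field_simp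
  have l0 : 0 ≤ D / S := by rw [e1]; positivity
  have l1 : D / S ≤ 1 := by rw [e1, div_le_one hDS, hS]; nlinarith
  have m0 : 0 ≤ E / S := by rw [e2]; exact div_nonneg hDE.le hDS.le
  have m1 : E / S ≤ 1 := by rw [e2, div_le_one hDS, hS]; nlinarith
  refine ⟨(1 - D / S) • a + (D / S) • q, ⟨1 - D / S, D / S, by linarith, l0, by ring, rfl⟩,
    ⟨1 - E / S, E / S, by linarith, m0, by ring, ?_⟩⟩
  ext <;> simp only [Prod.fst_add, Prod.snd_add, Prod.smul_fst, Prod.smul_snd, smul_eq_mul] <;>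
    field_simp <;> simp only [hS, hD, hE, hK, cross, Prod.fst_sub, Prod.snd_sub] <;> ring

/-- If `a` is strictly between `p` and `q`, and lies neither on `bp` nor on `bq`, then the line `pq`
is not the line `ab`. -/
lemma cross_ne_zero {a b p q : ℝ × ℝ} (hab : a ≠ b) (ha : a ∈ openSegment ℝ p q)
    (hp : a ∉ segment ℝ b p) (hq : a ∉ segment ℝ b q) : cross (b - a) (q - a) ≠ 0 := by
  intro h0
  obtain ⟨α, β, hα, hβ, hs, he⟩ := ha
  have g1 := congrArg Prod.fst he
  have g2 := congrArg Prod.snd he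
  simp only [cross, Prod.fst_add, Prod.snd_add, Prod.smul_fst, Prod.smul_snd, smul_eq_mul,
    Prod.fst_sub, Prod.snd_sub] at g1 g2 h0
  set N := (b.1 - a.1) ^ 2 + (b.2 - a.2) ^ 2 with hN
  have hNpos : 0 < N := by
    by_contra hn
    apply hab
    have h1 : b.1 - a.1 = 0 := by nlinarith [sq_nonneg (b.1 - a.1), sq_nonneg (b.2 - a.2)]
    have h2 : b.2 - a.2 = 0 := by nlinarith [sq_nonneg (b.1 - a.1), sq_nonneg (b.2 - a.2)]
    ext <;> linarith
  -- a point `r = a + x (b - a)` with `x ≤ 0` has `a` on the segment `br`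
  have key : ∀ (r : ℝ × ℝ) (x : ℝ), x ≤ 0 → r.1 - a.1 = x * (b.1 - a.1) →
      r.2 - a.2 = x * (b.2 - a.2) → a ∈ segment ℝ b r := by
    intro r x hx h1 h2
    have hx1 : 0 < 1 - x := by linarith
    refine ⟨-x / (1 - x), 1 / (1 - x), div_nonneg (by linarith) hx1.le, by positivity,
      by field_simp; ring, ?_⟩
    ext <;> simp only [Prod.fst_add, Prod.snd_add, Prod.smul_fst, Prod.smul_snd, smul_eq_mul] <;>
      field_simp
    · linear_combination h1
    · linear_combination h2
  set x := ((b.1 - a.1) * (q.1 - a.1) + (b.2 - a.2) * (q.2 - a.2)) / N with hx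
  have q1 : q.1 - a.1 = x * (b.1 - a.1) := by
    rw [hx]; field_simp; rw [hN]; linear_combination -(b.2 - a.2) * h0
  have q2 : q.2 - a.2 = x * (b.2 - a.2) := by
    rw [hx]; field_simp; rw [hN]; linear_combination (b.1 - a.1) * h0
  rcases le_total x 0 with hx0 | hx0
  · exact hq (key q x hx0 q1 q2)
  · have hα' : α ≠ 0 := hα.ne'
    refine hp (key p (-(β / α) * x) ?_ ?_ ?_)
    · have := mul_nonneg (div_pos hβ hα).le hx0
      linarith
    · field_simp
      linear_combination g1 - a.1 * hs - β * q1
    · field_simp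
      linear_combination g2 - a.2 * hs - β * q2

/-- The two alignments, with `q` and `q'` on the same (positive) side of `ab`, force a pair of
diagonals to meet on one of the two sides of `ab`. -/
lemma meet_of_pos {a b p q p' q' : ℝ × ℝ} (ha : a ∈ openSegment ℝ p q)
    (hb : b ∈ openSegment ℝ p' q') (hD : 0 < cross (b - a) (q - a))
    (hE : 0 < cross (b - a) (q' - b)) :
    (q ≠ q' ∧ ∃ x, x ∈ segment ℝ a q' ∧ x ∈ segment ℝ b q) ∨
      (p ≠ p' ∧ ∃ x, x ∈ segment ℝ a p' ∧ x ∈ segment ℝ b p) := by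
  -- when two far ends coincide, the lines converge there
  have hne : ∀ r r' : ℝ × ℝ, r = r' → cross (r - a) (r' - b) = cross (b - a) (r - a) := by
    rintro r _ rfl
    simp only [cross, Prod.fst_sub, Prod.snd_sub]; ring
  obtain ⟨α, β, hα, hβ, hs, he⟩ := ha
  obtain ⟨γ, δ, hγ, hδ, hs', he'⟩ := hb
  have v : p - a = (-(β / α)) • (q - a) := by
    have g1 := congrArg Prod.fst he
    have g2 := congrArg Prod.snd he
    simp only [Prod.fst_add, Prod.snd_add, Prod.smul_fst, Prod.smul_snd, smul_eq_mul] at g1 g2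
    ext <;> simp only [Prod.fst_sub, Prod.snd_sub, Prod.smul_fst, Prod.smul_snd, smul_eq_mul] <;>
      field_simp
    · linear_combination g1 - a.1 * hs
    · linear_combination g2 - a.2 * hs
  have w : p' - b = (-(δ / γ)) • (q' - b) := by
    have g1 := congrArg Prod.fst he'
    have g2 := congrArg Prod.snd he'
    simp only [Prod.fst_add, Prod.snd_add, Prod.smul_fst, Prod.smul_snd, smul_eq_mul] at g1 g2
    ext <;> simp only [Prod.fst_sub, Prod.snd_sub, Prod.smul_fst, Prod.smul_snd, smul_eq_mul] <;>
      field_simp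
    · linear_combination g1 - b.1 * hs'
    · linear_combination g2 - b.2 * hs'
  have hr : 0 < β / α := div_pos hβ hα
  have hr' : 0 < δ / γ := div_pos hδ hγ
  have smul_r : ∀ (c : ℝ) (x y : ℝ × ℝ), cross x (c • y) = c * cross x y := by
    intro c x y; simp only [cross, Prod.smul_fst, Prod.smul_snd, smul_eq_mul]; ring
  have smul_l : ∀ (c : ℝ) (x y : ℝ × ℝ), cross (c • x) y = c * cross x y := by
    intro c x y; simp only [cross, Prod.smul_fst, Prod.smul_snd, smul_eq_mul]; ring
  have hD' : cross (b - a) (p - a) < 0 := by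
    rw [v, smul_r]; nlinarith [mul_pos hr hD]
  have hE' : cross (b - a) (p' - b) < 0 := by
    rw [w, smul_r]; nlinarith [mul_pos hr' hE]
  rcases le_or_gt (cross (q - a) (q' - b)) 0 with hK | hK
  · left
    refine ⟨fun h => ?_, diagonals_meet (mul_pos hD hE) (mul_nonpos_of_nonneg_of_nonpos hD.le hK)⟩
    linarith [hne _ _ h]
  · right
    have hK' : 0 < cross (p - a) (p' - b) := by
      rw [v, w, smul_l, smul_r]
      have := mul_pos (mul_pos hr hr') hK
      linarith
    refine ⟨fun h => ?_, diagonals_meet (mul_pos_of_neg_of_neg hD' hE')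
      (mul_nonpos_of_nonpos_of_nonneg hD'.le hK'.le)⟩
    linarith [hne _ _ h]

/-- The sign of the cross product changes across an aligned vertex. -/
lemma cross_pos_of_neg {d a p q : ℝ × ℝ} (ha : a ∈ openSegment ℝ p q)
    (h : cross d (q - a) < 0) : 0 < cross d (p - a) := by
  obtain ⟨α, β, hα, hβ, hs, he⟩ := ha
  have g1 := congrArg Prod.fst he
  have g2 := congrArg Prod.snd he
  simp only [cross, Prod.fst_add, Prod.snd_add, Prod.smul_fst, Prod.smul_snd, smul_eq_mul,
    Prod.fst_sub, Prod.snd_sub] at g1 g2 h ⊢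
  have e : α * (d.1 * (p.2 - a.2) - d.2 * (p.1 - a.1)) =
      -(β * (d.1 * (q.2 - a.2) - d.2 * (q.1 - a.1))) := by
    linear_combination d.1 * g2 - d.2 * g1 - (d.1 * a.2 - d.2 * a.1) * hs
  refine pos_of_mul_pos_right (a := α) ?_ hα.le
  rw [e]
  have := mul_neg_of_pos_of_neg hβ h
  linarith

/-- in a planar straight-line drawing of a `k`-banana (`k ≥ 2`), if some pair of
edges is aligned at the covering vertex `a`, then no pair of edges is aligned at the other
covering vertex `b`. -/
theorem aligned_at_one_covering_vertex_only (k : ℕ) (hk : 2 ≤ k) (ρ : Bool ⊕ Fin k → ℝ × ℝ)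
    (h : IsPlanarDrawing (banana k) ρ)
    (ha : ∃ i j : Fin k, i ≠ j ∧
      ρ (Sum.inl false) ∈ openSegment ℝ (ρ (Sum.inr i)) (ρ (Sum.inr j))) :
    ¬ ∃ s t : Fin k, s ≠ t ∧
      ρ (Sum.inl true) ∈ openSegment ℝ (ρ (Sum.inr s)) (ρ (Sum.inr t)) := by
  -- edges at different covering vertices with different ends are disjoint
  have H : ∀ i s : Fin k, i ≠ s → ∀ x, x ∈ segment ℝ (ρ (Sum.inl false)) (ρ (Sum.inr i)) →
      x ∉ segment ℝ (ρ (Sum.inl true)) (ρ (Sum.inr s)) := by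
    intro i s his x hx hx'
    have h1 : (banana k).Adj (Sum.inl false) (Sum.inr i) := by simp [banana]
    have h2 : (banana k).Adj (Sum.inl true) (Sum.inr s) := by simp [banana]
    obtain ⟨w, hw, hw', -⟩ := h.edge_inter h1 h2 (by simp) x hx hx'
    rcases hw with rfl | rfl <;> rcases hw' with hw' | hw' <;> simp_all
  rintro ⟨s, t, hst, hb⟩
  obtain ⟨i, j, hij, ha⟩ := ha
  have hab : ρ (Sum.inl false) ≠ ρ (Sum.inl true) := fun e => by simpa using h.inj e
  have hD := cross_ne_zero hab ha (H j i hij.symm _ (left_mem_segment ..))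
    (H i j hij _ (left_mem_segment ..))
  have hE := cross_ne_zero hab.symm hb (fun hx => H s t hst _ hx (left_mem_segment ..))
    (fun hx => H t s hst.symm _ hx (left_mem_segment ..))
  -- the previous fact is about the reversed base vector `a - b`
  have hE : cross (ρ (Sum.inl true) - ρ (Sum.inl false)) (ρ (Sum.inr t) - ρ (Sum.inl true)) ≠ 0 := by
    intro h0
    apply hE
    simp only [cross, Prod.fst_sub, Prod.snd_sub] at h0 ⊢
    linarith
  have main : ∀ i j s t : Fin k,
      ρ (Sum.inl false) ∈ openSegment ℝ (ρ (Sum.inr i)) (ρ (Sum.inr j)) →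
      ρ (Sum.inl true) ∈ openSegment ℝ (ρ (Sum.inr s)) (ρ (Sum.inr t)) →
      0 < cross (ρ (Sum.inl true) - ρ (Sum.inl false)) (ρ (Sum.inr j) - ρ (Sum.inl false)) →
      0 < cross (ρ (Sum.inl true) - ρ (Sum.inl false)) (ρ (Sum.inr t) - ρ (Sum.inl true)) →
      False := by
    intro i j s t ha hb hD hE
    rcases meet_of_pos ha hb hD hE with ⟨hne, x, hx, hx'⟩ | ⟨hne, x, hx, hx'⟩
    · exact H t j (fun e => hne (by rw [e])) x hx hx'
    · exact H s i (fun e => hne (by rw [e])) x hx hx'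
  have ha' := ha
  have hb' := hb
  rw [openSegment_symm] at ha' hb'
  rcases hD.lt_or_gt with hD | hD <;> rcases hE.lt_or_gt with hE | hE
  · exact main _ _ _ _ ha' hb' (cross_pos_of_neg ha hD) (cross_pos_of_neg hb hE)
  · exact main _ _ _ _ ha' hb (cross_pos_of_neg ha hD) hE
  · exact main _ _ _ _ ha hb' hD (cross_pos_of_neg hb hE)
  · exact main _ _ _ _ ha hb hD hE
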